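/- arXiv:1010.2296 — 3 statements merged into one kernel-verified Lean document; each statement's English description precedes it below -/
import Mathlib

section
/- Let G be a finite connected simple chordal graph with no bridges. Then rc(G) ≤ 3 · rad(G), where rad(G) is the radius of G. -/
open SimpleGraph Set

/-- The predicate that an edge colouring `c` makes `G` rainbow connected: every pair of
vertices is joined by a path no two of whose edges receive the same colour. -/
def RainbowConnectedUnder {V : Type*} (G : SimpleGraph V) (c : Sym2 V → ℕ) : Prop :=
  ∀ u v : V, ∃ p : G.Walk u v, p.IsPath ∧ (p.edges.map c).Nodup

/-- The rainbow connection number of `G`: the least `n` such that some edge colouring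
using colours `< n` makes `G` rainbow connected. -/
noncomputable def rc {V : Type*} (G : SimpleGraph V) : ℕ :=
  sInf {n | ∃ c : Sym2 V → ℕ, (∀ e ∈ G.edgeSet, c e < n) ∧ RainbowConnectedUnder G c}

/-- Degree of a vertex (as the cardinality of its neighbour set). -/
noncomputable def deg {V : Type*} (G : SimpleGraph V) (v : V) : ℕ := (G.neighborSet v).ncard

/-- `D` is a dominating set of `G`. -/
def IsDominatingSet {V : Type*} (G : SimpleGraph V) (D : Set V) : Prop :=
  ∀ v : V, v ∈ D ∨ ∃ u ∈ D, G.Adj u v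

/-- The connected domination number of `G`. -/
noncomputable def connDomNum {V : Type*} (G : SimpleGraph V) : ℕ :=
  sInf {n | ∃ D : Set V, D.ncard = n ∧ IsDominatingSet G D ∧ (G.induce D).Connected}

/-- Distance of a vertex `v` to a set of vertices `D`. -/
noncomputable def distSet {V : Type*} (G : SimpleGraph V) (D : Set V) (v : V) : ℕ :=
  sInf ((fun u => G.dist u v) '' D)

/-- Diameter of `G`. -/
noncomputable def graphDiam {V : Type*} (G : SimpleGraph V) : ℕ :=
  sSup (Set.range fun p : V × V => G.dist p.1 p.2)

/-- Eccentricity of a vertex. -/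
noncomputable def ecc {V : Type*} (G : SimpleGraph V) (v : V) : ℕ :=
  sSup (Set.range fun u => G.dist v u)

/-- Radius of `G`. -/
noncomputable def graphRadius {V : Type*} (G : SimpleGraph V) : ℕ :=
  sInf (Set.range fun v => ecc G v)

/-- `G` is an interval graph: vertices can be assigned nonempty closed real intervals such
that two distinct vertices are adjacent iff their intervals intersect. -/
def IsIntervalGraph {V : Type*} (G : SimpleGraph V) : Prop :=
  ∃ a b : V → ℝ, (∀ v, a v ≤ b v) ∧
    ∀ u v : V, u ≠ v → (G.Adj u v ↔ (Set.Icc (a u) (b u) ∩ Set.Icc (a v) (b v)).Nonempty)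

/-- `G` is a unit interval graph. -/
def IsUnitIntervalGraph {V : Type*} (G : SimpleGraph V) : Prop :=
  ∃ a : V → ℝ,
    ∀ u v : V, u ≠ v →
      (G.Adj u v ↔ (Set.Icc (a u) (a u + 1) ∩ Set.Icc (a v) (a v + 1)).Nonempty)

/-- `G` is a circular arc graph: vertices can be assigned nonempty closed arcs of a circle
(images of closed intervals in `AddCircle 1`) such that two distinct vertices are adjacent
iff their arcs intersect. -/
def IsCircularArcGraph {V : Type*} (G : SimpleGraph V) : Prop :=
  ∃ a b : V → ℝ, (∀ v, a v ≤ b v) ∧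
    ∀ u v : V, u ≠ v → (G.Adj u v ↔
      (((fun x : ℝ => (x : AddCircle (1:ℝ))) '' Set.Icc (a u) (b u)) ∩
        ((fun x : ℝ => (x : AddCircle (1:ℝ))) '' Set.Icc (a v) (b v))).Nonempty)

/-- There is a path from `x` to `y` avoiding the closed neighbourhood of `z`. -/
def HasAvoidingPath {V : Type*} (G : SimpleGraph V) (x y z : V) : Prop :=
  ∃ p : G.Walk x y, p.IsPath ∧ ∀ w ∈ p.support, w ≠ z ∧ ¬ G.Adj z w

/-- `G` is AT-free: it has no asteroidal triple. -/
def IsATFree {V : Type*} (G : SimpleGraph V) : Prop :=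
  ¬ ∃ x y z : V, x ≠ y ∧ y ≠ z ∧ x ≠ z ∧ ¬G.Adj x y ∧ ¬G.Adj y z ∧ ¬G.Adj x z ∧
    HasAvoidingPath G x y z ∧ HasAvoidingPath G y z x ∧ HasAvoidingPath G x z y

/-- `G` is a threshold graph. -/
def IsThresholdGraph {V : Type*} (G : SimpleGraph V) : Prop :=
  ∃ (w : V → ℝ) (t : ℝ), ∀ u v : V, u ≠ v → (G.Adj u v ↔ t ≤ w u + w v)

/-- `G` is a chain graph: bipartite with the neighbourhoods of one side linearly ordered
by inclusion. -/
def IsChainGraph {V : Type*} (G : SimpleGraph V) : Prop :=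
  ∃ A B : Set V, A ∪ B = Set.univ ∧ Disjoint A B ∧
    (∀ u v : V, G.Adj u v → ¬(u ∈ A ∧ v ∈ A) ∧ ¬(u ∈ B ∧ v ∈ B)) ∧
    ∀ a₁ ∈ A, ∀ a₂ ∈ A,
      G.neighborSet a₁ ⊆ G.neighborSet a₂ ∨ G.neighborSet a₂ ⊆ G.neighborSet a₁

/-- `G` is chordal: it has no induced cycle of length greater than 3. -/
def IsChordal {V : Type*} (G : SimpleGraph V) : Prop :=
  ∀ n : ℕ, 4 ≤ n → IsEmpty (SimpleGraph.cycleGraph n ↪g G)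

/-!
If `u v` is not a bridge, a shortest walk from `u` to `v` avoiding this edge closes up with it to an
induced cycle, so in a chordal graph every edge that is not a bridge lies in a triangle.

When every edge lies in a triangle, every vertex outside a ball `D` around a centre but inside the
next ball `M` has a neighbour in `D` and a second neighbour in `M`. A rainbow coloring of `D` then
extends to `M` with three new colors. Choose a maximal independent set `A` of `M \ D` and an anchor
in `D` for each vertex of `A`. Edges from `A` to the anchors get color `k`, the other edges between
`M \ D` and `D` color `k + 1`, the edges inside `M \ D` color `k + 2`. Each vertex of `M` has two
rainbow walks into `D`, with colors in `{k}` and `{k + 1, k + 2}` or in `{k + 1}` and `{k, k + 2}`,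
so any two vertices can be given such walks with disjoint sets of colors.
-/

section InducedCycles

variable {V : Type*} {G : SimpleGraph V} {u v : V}

theorem dist_getVert_of_length_eq_dist {p : G.Walk u v} (hp : p.length = G.dist u v) {i : ℕ}
    (hi : i ≤ p.length) : G.dist u (p.getVert i) = i := by
  rw [← length_eq_dist_of_subwalk hp (p.isSubwalk_take i), Walk.take_length, min_eq_left hi]

theorem adj_getVert_iff_of_length_eq_dist {p : G.Walk u v} (hp : p.length = G.dist u v) {i j : ℕ}
    (hi : i ≤ p.length) (hj : j ≤ p.length) :
    G.Adj (p.getVert i) (p.getVert j) ↔ i + 1 = j ∨ j + 1 = i := by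
  constructor
  · intro hadj
    have hdist := hadj.diff_dist_adj (u := u)
    have hdist' := hadj.symm.diff_dist_adj (u := u)
    rw [dist_getVert_of_length_eq_dist hp hi, dist_getVert_of_length_eq_dist hp hj]
      at hdist hdist'
    have hij : i ≠ j := fun h => hadj.ne (congrArg p.getVert h)
    omega
  · rintro (rfl | rfl)
    · exact p.adj_getVert_succ hj
    · exact (p.adj_getVert_succ hi).symm

/-- The vertices of a shortest walk, as an induced path. -/
def pathGraphEmbeddingOfLengthEqDist (p : G.Walk u v) (hp : p.length = G.dist u v) :
    pathGraph (p.length + 1) ↪g G where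
  toFun i := p.getVert i
  inj' i j hij := Fin.ext <| (p.isPath_of_length_eq_dist hp).getVert_injOn i.is_le j.is_le hij
  map_rel_iff' {i j} :=
    (adj_getVert_iff_of_length_eq_dist hp i.is_le j.is_le).trans pathGraph_adj.symm

theorem cycleGraph_succ_eq_pathGraph_sup_edge (n : ℕ) :
    cycleGraph (n + 1) = pathGraph (n + 1) ⊔ edge 0 (Fin.last n) := by
  have sub_val_eq_one (a b : Fin (n + 1)) :
      (a - b).val = 1 ↔ b.val + 1 = a.val ∨ a.val = 0 ∧ b.val = n ∧ a ≠ b := by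
    rcases le_or_gt b a with h | h
    · rw [Fin.sub_val_of_le h]
      omega
    · rw [Fin.val_sub, Nat.mod_eq_of_lt (by omega)]
      omega
  ext i j
  simp only [cycleGraph_adj', sub_val_eq_one, sup_adj, pathGraph_adj, edge_adj, Fin.ext_iff,
    Fin.val_zero, Fin.val_last]
  omega

theorem nonempty_cycleGraph_embedding_sup_edge {p : G.Walk u v} (hp : p.length = G.dist u v) :
    Nonempty (cycleGraph (p.length + 1) ↪g G ⊔ edge u v) := by
  let φ := pathGraphEmbeddingOfLengthEqDist p hp
  have hstart : φ 0 = u := p.getVert_zero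
  have hend : φ (Fin.last _) = v := p.getVert_length
  have hedge : edge u v = edge (φ 0) (φ (Fin.last _)) := by rw [hstart, hend]
  rw [cycleGraph_succ_eq_pathGraph_sup_edge, hedge]
  exact ⟨⟨φ.toEmbedding, by simp [edge_adj]⟩⟩

theorem IsChordal.commonNeighbors_nonempty (hG : IsChordal G) (huv : G.Adj u v)
    (hbridge : ¬ G.IsBridge s(u, v)) : (G.commonNeighbors u v).Nonempty := by
  set H := G.deleteEdges {s(u, v)}
  have hreach : H.Reachable u v := by rwa [isBridge_iff, not_not] at hbridge
  have hsup : H ⊔ edge u v = G := sdiff_sup_cancel ((edge_le_iff G).mpr (.inr huv))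
  obtain ⟨p, hp⟩ := hreach.exists_walk_length_eq_dist
  have hdist_le : H.dist u v ≤ 2 := by
    by_contra! hlt
    obtain ⟨φ⟩ := nonempty_cycleGraph_embedding_sup_edge hp
    rw [hsup] at φ
    exact (hG _ (by omega)).false φ
  have hlt_dist : 1 < H.dist u v :=
    hreach.one_lt_dist_of_ne_of_not_adj huv.ne (by simp [H])
  have hedist : H.edist u v = 2 := by
    rw [← hreach.coe_dist_eq_edist, hdist_le.antisymm hlt_dist, Nat.cast_ofNat]
  obtain ⟨w, huw, hvw⟩ := (edist_eq_two_iff.mp hedist).2.2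
  exact ⟨w, deleteEdges_le _ huw, deleteEdges_le _ hvw⟩

end InducedCycles

theorem exists_isIndepSet_subset_dominating {V : Type*} (G : SimpleGraph V) (N : Set V) :
    ∃ A ⊆ N, G.IsIndepSet A ∧ ∀ x ∈ N \ A, ∃ z ∈ A, G.Adj x z := by
  obtain ⟨A, ⟨hAN, hA⟩, hmax⟩ := zorn_subset {A | A ⊆ N ∧ G.IsIndepSet A} fun C hC hchain =>
    ⟨⋃₀ C, ⟨sUnion_subset fun B hB => (hC hB).1,
      (pairwise_sUnion hchain.directedOn).mpr fun B hB => (hC hB).2⟩,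
      fun B hB => subset_sUnion_of_mem hB⟩
  refine ⟨A, hAN, hA, fun x ⟨hxN, hxA⟩ => ?_⟩
  by_contra! hx
  have hinsert : G.IsIndepSet (insert x A) :=
    hA.insert fun z hz _ => ⟨hx z hz, fun h => hx z hz h.symm⟩
  exact hxA (hmax ⟨insert_subset hxN hAN, hinsert⟩ (subset_insert x A) (mem_insert x A))

section RainbowWalks

variable {V : Type*} {G : SimpleGraph V} {c c' : Sym2 V → ℕ} {D M : Set V} {S T : Set ℕ}
  {x y u w : V} {k : ℕ}

/-- Any two vertices of `D` are joined by a rainbow walk that stays in `D`. Asking for a walk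
rather than a path is equivalent, since removing cycles from a walk keeps it rainbow. -/
def RainbowConnectedOn (G : SimpleGraph V) (c : Sym2 V → ℕ) (D : Set V) : Prop :=
  ∀ u ∈ D, ∀ w ∈ D, ∃ p : G.Walk u w, (∀ v ∈ p.support, v ∈ D) ∧ (p.edges.map c).Nodup

/-- The subgraph induced on `D` has a rainbow coloring with the colors `0, …, k - 1`. Colorings
are defined on all of `Sym2 V`, so only the values on edges inside `D` are constrained. -/
def RainbowColorableOn (G : SimpleGraph V) (D : Set V) (k : ℕ) : Prop :=
  ∃ c : Sym2 V → ℕ, (∀ e ∈ G.edgeSet ∩ D.sym2, c e < k) ∧ RainbowConnectedOn G c D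

/-- There is a rainbow walk inside `M` that leads from `x` to `D` and uses only colors in `S`. -/
def HasRainbowTail (G : SimpleGraph V) (c : Sym2 V → ℕ) (D M : Set V) (S : Set ℕ) (x : V) :
    Prop :=
  ∃ d ∈ D, ∃ p : G.Walk x d,
    (∀ v ∈ p.support, v ∈ M) ∧ (p.edges.map c).Nodup ∧ ∀ e ∈ p.edges, c e ∈ S

theorem mem_edgeSet_inter_sym2_of_mem_edges {p : G.Walk u w} (hp : ∀ v ∈ p.support, v ∈ D)
    {e : Sym2 V} (he : e ∈ p.edges) : e ∈ G.edgeSet ∩ D.sym2 := by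
  induction e with
  | _ a b =>
    exact ⟨p.edges_subset_edgeSet he,
      hp a (p.fst_mem_support_of_mem_edges he), hp b (p.snd_mem_support_of_mem_edges he)⟩

theorem RainbowConnectedOn.congr (hc : RainbowConnectedOn G c D)
    (heq : ∀ e ∈ G.edgeSet ∩ D.sym2, c' e = c e) : RainbowConnectedOn G c' D := by
  intro u hu w hw
  obtain ⟨p, hpD, hp⟩ := hc u hu w hw
  refine ⟨p, hpD, ?_⟩
  rwa [List.map_congr_left fun e he => heq e (mem_edgeSet_inter_sym2_of_mem_edges hpD he)]

theorem RainbowConnectedOn.rainbowConnectedUnder (hc : RainbowConnectedOn G c univ) :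
    RainbowConnectedUnder G c := by
  classical
  intro u w
  obtain ⟨p, -, hp⟩ := hc u (mem_univ u) w (mem_univ w)
  exact ⟨p.bypass, p.bypass_isPath, hp.sublist (p.edges_bypass_sublist_edges.map c)⟩

theorem RainbowColorableOn.rc_le (h : RainbowColorableOn G univ k) : rc G ≤ k := by
  obtain ⟨c, hlt, hc⟩ := h
  exact Nat.sInf_le ⟨c, fun e he => hlt e ⟨he, by simp⟩, hc.rainbowConnectedUnder⟩

theorem rainbowColorableOn_singleton (G : SimpleGraph V) (v : V) :
    RainbowColorableOn G {v} 0 := by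
  refine ⟨fun _ => 0, ?_, ?_⟩
  · rintro e ⟨he, hev⟩
    induction e with
    | _ a b =>
      obtain ⟨rfl, rfl⟩ := mk_mem_sym2_iff.mp hev
      exact (G.loopless.irrefl _ he).elim
  · rintro u rfl w rfl
    exact ⟨Walk.nil, by simp, by simp⟩

theorem HasRainbowTail.refl (hxD : x ∈ D) (hxM : x ∈ M) : HasRainbowTail G c D M S x :=
  ⟨x, hxD, Walk.nil, by simpa using hxM, by simp, by simp⟩

theorem HasRainbowTail.cons (hxM : x ∈ M) (hxy : G.Adj x y) (hcS : c s(x, y) ∉ S)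
    (hy : HasRainbowTail G c D M S y) :
    HasRainbowTail G c D M (insert (c s(x, y)) S) x := by
  obtain ⟨d, hd, p, hpM, hp, hpS⟩ := hy
  refine ⟨d, hd, Walk.cons hxy p, ?_, ?_, ?_⟩
  · simpa [hxM] using hpM
  · rw [Walk.edges_cons, List.map_cons, List.nodup_cons]
    refine ⟨fun hmem => ?_, hp⟩
    obtain ⟨e, he, hce⟩ := List.mem_map.mp hmem
    exact hcS (hce ▸ hpS e he)
  · rw [Walk.edges_cons, List.forall_mem_cons]
    exact ⟨mem_insert _ _, fun e he => mem_insert_of_mem _ (hpS e he)⟩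

theorem HasRainbowTail.of_adj (hDM : D ⊆ M) (hxM : x ∈ M) (hy : y ∈ D) (hxy : G.Adj x y) :
    HasRainbowTail G c D M {c s(x, y)} x := by
  simpa using HasRainbowTail.cons hxM hxy (notMem_empty (c s(x, y))) (.refl hy (hDM hy))

theorem HasRainbowTail.mono (hST : S ⊆ T) (hx : HasRainbowTail G c D M S x) :
    HasRainbowTail G c D M T x := by
  obtain ⟨d, hd, p, hpM, hp, hpS⟩ := hx
  exact ⟨d, hd, p, hpM, hp, fun e he => hST (hpS e he)⟩

theorem RainbowConnectedOn.exists_walk_of_hasRainbowTail (hc : RainbowConnectedOn G c D)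
    (hDM : D ⊆ M) (hST : Disjoint S T) (hD : ∀ e ∈ G.edgeSet ∩ D.sym2, c e ∉ S ∪ T)
    (hu : HasRainbowTail G c D M S u) (hw : HasRainbowTail G c D M T w) :
    ∃ p : G.Walk u w, (∀ v ∈ p.support, v ∈ M) ∧ (p.edges.map c).Nodup := by
  obtain ⟨a, ha, p, hpM, hp, hpS⟩ := hu
  obtain ⟨b, hb, q, hqM, hq, hqT⟩ := hw
  obtain ⟨r, hrD, hr⟩ := hc a ha b hb
  have hrST : ∀ e ∈ r.edges, c e ∈ (S ∪ T)ᶜ := fun e he =>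
    hD e (mem_edgeSet_inter_sym2_of_mem_edges hrD he)
  have disjoint_colors {l l' : List (Sym2 V)} {L L' : Set ℕ} (hL : Disjoint L L')
      (hl : ∀ e ∈ l, c e ∈ L) (hl' : ∀ e ∈ l', c e ∈ L') : (l.map c).Disjoint (l'.map c) := by
    rw [List.disjoint_left, List.forall_mem_map]
    intro e he he'
    obtain ⟨e', hmem, heq⟩ := List.mem_map.mp he'
    exact disjoint_left.mp hL (hl e he) (heq ▸ hl' e' hmem)
  have hpr := disjoint_colors (disjoint_compl_right.mono_left subset_union_left) hpS hrST
  have hpq := disjoint_colors hST hpS hqT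
  have hrq := disjoint_colors (disjoint_compl_left.mono_right subset_union_right) hrST hqT
  refine ⟨p.append (r.append q.reverse), fun v hv => ?_, ?_⟩
  · simp only [Walk.mem_support_append_iff, Walk.support_reverse, List.mem_reverse] at hv
    rcases hv with hv | hv | hv
    exacts [hpM v hv, hDM (hrD v hv), hqM v hv]
  · simp only [Walk.edges_append, Walk.edges_reverse, List.map_append, List.map_reverse,
      List.nodup_append', List.nodup_reverse, List.disjoint_append_right,
      List.disjoint_reverse_right]
    exact ⟨hp, ⟨hr, hq, hrq⟩, hpr, hpq⟩

end RainbowWalks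

section LayerColoring

variable {V : Type*} {G : SimpleGraph V} {c : Sym2 V → ℕ} {k : ℕ} {D M A : Set V} {f : V → V}
  {x y : V}

/-- The extension of a coloring `c` of the edges inside `D` by three further colors: `k` for the
edges from `a ∈ A` to the chosen neighbor `f a ∈ D`, `k + 1` for all other edges that leave `D`,
and `k + 2` for the edges outside `D`. -/
noncomputable def layerColoring (c : Sym2 V → ℕ) (k : ℕ) (D A : Set V) (f : V → V)
    (e : Sym2 V) : ℕ :=
  open Classical in
  if e ∈ D.sym2 then c e
  else if e ∈ Dᶜ.sym2 then k + 2
  else if e ∈ (fun a => s(a, f a)) '' A then k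
  else k + 1

theorem layerColoring_of_mem_sym2 {e : Sym2 V} (he : e ∈ D.sym2) :
    layerColoring c k D A f e = c e :=
  if_pos he

theorem layerColoring_of_notMem (hx : x ∉ D) (hy : y ∉ D) :
    layerColoring c k D A f s(x, y) = k + 2 := by
  simp [layerColoring, hx, hy]

theorem layerColoring_anchor (hxA : x ∈ A) (hx : x ∉ D) (hfx : f x ∈ D) :
    layerColoring c k D A f s(x, f x) = k := by
  have hmem : s(x, f x) ∈ (fun a => s(a, f a)) '' A := mem_image_of_mem _ hxA
  simp [layerColoring, hx, hfx, -mem_image, hmem]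

theorem layerColoring_of_not_anchor (hAD : Disjoint A D) (hx : x ∉ D) (hy : y ∈ D)
    (hne : x ∈ A → y ≠ f x) : layerColoring c k D A f s(x, y) = k + 1 := by
  have hmem : s(x, y) ∉ (fun a => s(a, f a)) '' A := by
    rintro ⟨a, ha, hea⟩
    rcases Sym2.eq_iff.mp hea with ⟨rfl, hfy⟩ | ⟨rfl, -⟩
    · exact hne ha hfy.symm
    · exact disjoint_left.mp hAD ha hy
  simp [layerColoring, hx, hy, -mem_image, hmem]

theorem layerColoring_lt {e : Sym2 V} (hc : e ∈ D.sym2 → c e < k) :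
    layerColoring c k D A f e < k + 3 := by
  unfold layerColoring
  split_ifs with he
  · exact (hc he).trans (by omega)
  all_goals omega

theorem hasRainbowTail_anchor (hDM : D ⊆ M) (hx : x ∈ M \ D) (hxA : x ∈ A) (hfx : f x ∈ D)
    (hadj : G.Adj x (f x)) : HasRainbowTail G (layerColoring c k D A f) D M {k} x := by
  simpa only [layerColoring_anchor hxA hx.2 hfx] using
    HasRainbowTail.of_adj (c := layerColoring c k D A f) hDM hx.1 hfx hadj

theorem hasRainbowTail_of_not_anchor (hDM : D ⊆ M) (hAD : Disjoint A D) (hx : x ∈ M \ D)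
    (hy : y ∈ D) (hxy : G.Adj x y) (hne : x ∈ A → y ≠ f x) :
    HasRainbowTail G (layerColoring c k D A f) D M {k + 1} x := by
  simpa only [layerColoring_of_not_anchor hAD hx.2 hy hne] using
    HasRainbowTail.of_adj (c := layerColoring c k D A f) hDM hx.1 hy hxy

theorem HasRainbowTail.cons_layer {S : Set ℕ} (hx : x ∈ M \ D) (hy : y ∈ M \ D)
    (hxy : G.Adj x y) (hkS : k + 2 ∉ S)
    (htail : HasRainbowTail G (layerColoring c k D A f) D M S y) :
    HasRainbowTail G (layerColoring c k D A f) D M (insert (k + 2) S) x := by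
  have hcolor : layerColoring c k D A f s(x, y) = k + 2 := layerColoring_of_notMem hx.2 hy.2
  simpa only [hcolor] using htail.cons hx.1 hxy (by rwa [hcolor])

/-- `D` is a two-way dominating set relative to `M`: every vertex of `M` outside `D` has a
neighbor in `D` and another neighbor in `M`. -/
def TwoWayDominates (G : SimpleGraph V) (D M : Set V) : Prop :=
  ∀ x ∈ M \ D, ∃ y ∈ D, ∃ z ∈ M, z ≠ y ∧ G.Adj x y ∧ G.Adj x z

theorem exists_layerColoring_hasRainbowTail (hDM : D ⊆ M) (hdom : TwoWayDominates G D M)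
    (c : Sym2 V → ℕ) (k : ℕ) :
    ∃ (A : Set V) (f : V → V), ∀ x ∈ M,
      (HasRainbowTail G (layerColoring c k D A f) D M {k} x ∧
        HasRainbowTail G (layerColoring c k D A f) D M {k + 2, k + 1} x) ∨
      (HasRainbowTail G (layerColoring c k D A f) D M {k + 1} x ∧
        HasRainbowTail G (layerColoring c k D A f) D M {k + 2, k} x) := by
  obtain ⟨A, hAM, hindep, hAdom⟩ := exists_isIndepSet_subset_dominating G (M \ D)
  choose! f hfD g hgM hne hfadj hgadj using hdom
  have hAD : Disjoint A D := disjoint_sdiff_left.mono_left hAM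
  have htail_mem : ∀ x ∈ A, HasRainbowTail G (layerColoring c k D A f) D M {k} x := fun x hxA =>
    hasRainbowTail_anchor hDM (hAM hxA) hxA (hfD x (hAM hxA)) (hfadj x (hAM hxA))
  have htail_notMem : ∀ x ∈ M \ D, x ∉ A →
      HasRainbowTail G (layerColoring c k D A f) D M {k + 1} x := fun x hx hxA =>
    hasRainbowTail_of_not_anchor hDM hAD hx (hfD x hx) (hfadj x hx) (absurd · hxA)
  refine ⟨A, f, fun x hxM => ?_⟩
  by_cases hxD : x ∈ D
  · exact .inl ⟨.refl hxD hxM, .refl hxD hxM⟩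
  have hx : x ∈ M \ D := ⟨hxM, hxD⟩
  by_cases hxA : x ∈ A
  · refine .inl ⟨htail_mem x hxA, ?_⟩
    by_cases hgD : g x ∈ D
    · exact (hasRainbowTail_of_not_anchor hDM hAD hx hgD (hgadj x hx) fun _ => hne x hx).mono
        (by simp)
    · have hg : g x ∈ M \ D := ⟨hgM x hx, hgD⟩
      have hgA : g x ∉ A := fun h => hindep hxA h (hgadj x hx).ne (hgadj x hx)
      exact (htail_notMem _ hg hgA).cons_layer hx hg (hgadj x hx) (by simp)
  · obtain ⟨z, hzA, hxz⟩ := hAdom x ⟨hx, hxA⟩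
    exact .inr ⟨htail_notMem x hx hxA,
      (htail_mem z hzA).cons_layer hx (hAM hzA) hxz (by simp)⟩

theorem RainbowColorableOn.add_three (hD : RainbowColorableOn G D k) (hDM : D ⊆ M)
    (hdom : TwoWayDominates G D M) : RainbowColorableOn G M (k + 3) := by
  obtain ⟨c, hlt, hc⟩ := hD
  obtain ⟨A, f, htails⟩ := exists_layerColoring_hasRainbowTail hDM hdom c k
  have hold : ∀ e ∈ G.edgeSet ∩ D.sym2, layerColoring c k D A f e = c e := fun e he =>
    layerColoring_of_mem_sym2 he.2
  refine ⟨layerColoring c k D A f,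
    fun e he => layerColoring_lt fun heD => hlt e ⟨he.1, heD⟩, fun u hu w hw => ?_⟩
  have join {S T : Set ℕ} (hST : Disjoint S T) (hk : S ∪ T ⊆ Ici k) :=
    (hc.congr hold).exists_walk_of_hasRainbowTail (u := u) (w := w) hDM hST fun e he hmem =>
      (hold e he ▸ hlt e he).not_ge (hk hmem)
  rcases htails u hu with ⟨hu₁, -⟩ | ⟨hu₁, -⟩ <;>
    rcases htails w hw with ⟨hw₁, hw₂⟩ | ⟨hw₁, hw₂⟩
  · exact join (by simp) (by simp [insert_subset_iff]) hu₁ hw₂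
  · exact join (by simp) (by simp [insert_subset_iff]) hu₁ hw₁
  · exact join (by simp) (by simp [insert_subset_iff]) hu₁ hw₁
  · exact join (by simp) (by simp [insert_subset_iff]) hu₁ hw₂

end LayerColoring

section Balls

variable {V : Type*} {G : SimpleGraph V}

theorem twoWayDominates_ball (htri : ∀ ⦃x y⦄, G.Adj x y → (G.commonNeighbors x y).Nonempty)
    (v : V) (i : ℕ) : TwoWayDominates G (G.ball v (i + 1)) (G.ball v (i + 1 + 1)) := by
  rintro x ⟨hx, hx'⟩
  rw [mem_ball] at hx hx'
  have hdist : G.edist x v = (i + 1 : ℕ) := by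
    push_cast
    exact (Order.le_of_lt_add_one hx).antisymm (not_lt.mp hx')
  obtain ⟨p, hp⟩ := exists_walk_of_edist_eq_coe hdist
  cases p with
  | nil => simp at hp
  | @cons _ y _ hxy q =>
    obtain ⟨z, hxz, hyz⟩ := htri hxy
    have hy : G.edist y v ≤ i := (edist_le q).trans (by simp_all)
    have hz : G.edist z v ≤ i + 1 := calc
      G.edist z v ≤ G.edist z y + G.edist y v := G.edist_triangle
      _ ≤ 1 + i := add_le_add (edist_eq_one_iff_adj.mpr hyz.symm).le hy
      _ = i + 1 := add_comm _ _
    refine ⟨y, ?_, z, ?_, hyz.ne', hxy, hxz⟩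
    · exact hy.trans_lt (by exact_mod_cast i.lt_succ_self)
    · exact hz.trans_lt (by exact_mod_cast (i + 1).lt_succ_self)

theorem rainbowColorableOn_ball
    (htri : ∀ ⦃x y⦄, G.Adj x y → (G.commonNeighbors x y).Nonempty) (v : V) (i : ℕ) :
    RainbowColorableOn G (G.ball v (i + 1)) (3 * i) := by
  induction i with
  | zero => simpa using rainbowColorableOn_singleton G v
  | succ i ih =>
    push_cast
    exact ih.add_three (ball_mono le_self_add) (twoWayDominates_ball htri v i)

theorem coe_ecc [Nonempty V] (hG : G.ediam ≠ ⊤) (v : V) : (ecc G v : ℕ∞) = G.eccent v := by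
  have hbdd : BddAbove (range (G.dist v)) := ⟨G.diam, by rintro _ ⟨u, rfl⟩; exact dist_le_diam hG⟩
  rw [ecc, sSup_range, ENat.natCast_iSup hbdd, eccent_def]
  exact iSup_congr fun u => (connected_of_ediam_ne_top hG v u).coe_dist_eq_edist

theorem coe_graphRadius [Nonempty V] (hG : G.ediam ≠ ⊤) : (graphRadius G : ℕ∞) = G.radius := by
  rw [graphRadius, sInf_range, ENat.natCast_iInf]
  exact iInf_congr (coe_ecc hG)

end Balls

theorem stmt_8_general {V : Type*} (G : SimpleGraph V)
    (htri : ∀ ⦃x y⦄, G.Adj x y → (G.commonNeighbors x y).Nonempty) :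
    (rc G : ℕ∞) ≤ 3 * G.radius := by
  cases isEmpty_or_nonempty V
  · simp [radius_eq_top_of_isEmpty]
  obtain ⟨v, hv⟩ := G.exists_eccent_eq_radius
  cases hr : G.radius with
  | top => simp
  | coe r =>
    have hball : G.ball v (r + 1) = univ := eq_univ_of_forall fun u => calc
      G.edist u v = G.edist v u := edist_comm
      _ ≤ r := edist_le_eccent.trans_eq (hv.trans hr)
      _ < r + 1 := by exact_mod_cast r.lt_succ_self
    exact_mod_cast (hball ▸ rainbowColorableOn_ball htri v r).rc_le

/-- For a finite connected bridge-less chordal graph `G`,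
`rc(G) ≤ 3 · rad(G)`. -/
theorem stmt_8 {V : Type*} [Fintype V] (G : SimpleGraph V) (hG : G.Connected)
    (hchordal : IsChordal G) (hbf : ∀ e : Sym2 V, ¬ G.IsBridge e) :
    rc G ≤ 3 * graphRadius G := by
  have := hG.nonempty
  have hradius := coe_graphRadius (connected_iff_ediam_ne_top.mp hG)
  exact_mod_cast hradius ▸
    stmt_8_general G fun x y hxy => hchordal.commonNeighbors_nonempty hxy (hbf s(x, y))
end

section
/- Let G be a finite connected simple unit interval graph with minimum degree δ(G) ≥ 2. Then rc(G) = diam(G). -/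
open SimpleGraph Set

/-!
Root the graph at a vertex `r` whose interval is leftmost. Distances to `r` grow from left to
right, and every layer of vertices at a fixed distance from `r` is a clique: if `u` lies to the
left of `v` in the same layer, a neighbour `p` of `v` in the preceding layer lies to the left of
`u`, so `u` is squeezed between the adjacent vertices `p` and `v`, hence adjacent to `v`. Colour an
edge by the layer of its farther endpoint. Given `v` at least as far from `r` as `u`, follow a
geodesic from `v` towards `r` down to the layer of `u` and step to `u` inside that clique: the
colours strictly decrease along the way. Hence `diam G` colours suffice, and a rainbow path between
diametral vertices needs that many.
-/

section RainbowColouring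

variable {V : Type*} {G : SimpleGraph V} {c : Sym2 V → ℕ} {n : ℕ}

theorem dist_le_of_nodup_map_edges {u v : V} (p : G.Walk u v) (hp : (p.edges.map c).Nodup)
    (hc : ∀ e ∈ p.edges, c e < n) : G.dist u v ≤ n := by
  have colours_subset : p.edges.map c ⊆ List.range n := by
    simpa [List.subset_def] using hc
  calc G.dist u v ≤ p.length := dist_le p
    _ = (p.edges.map c).length := by rw [List.length_map, Walk.length_edges]
    _ ≤ (List.range n).length := (List.subperm_of_subset hp colours_subset).length_le
    _ = n := List.length_range

theorem RainbowConnectedUnder.graphDiam_le (h : RainbowConnectedUnder G c)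
    (hc : ∀ e ∈ G.edgeSet, c e < n) : graphDiam G ≤ n := by
  refine csSup_le' ?_
  rintro _ ⟨⟨u, v⟩, rfl⟩
  obtain ⟨p, -, hp⟩ := h u v
  exact dist_le_of_nodup_map_edges p hp fun e he ↦ hc e (p.edges_subset_edgeSet he)

theorem RainbowConnectedUnder.rc_eq_graphDiam (h : RainbowConnectedUnder G c)
    (hc : ∀ e ∈ G.edgeSet, c e < graphDiam G) : rc G = graphDiam G :=
  IsLeast.csInf_eq ⟨⟨c, hc, h⟩, fun _ ⟨_, hlt, hrainbow⟩ ↦ hrainbow.graphDiam_le hlt⟩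

theorem rainbowConnectedUnder_of_exists_walk
    (h : ∀ u v, ∃ p : G.Walk u v, (p.edges.map c).Nodup) : RainbowConnectedUnder G c := by
  classical
  intro u v
  obtain ⟨p, hp⟩ := h u v
  exact ⟨p.bypass, p.bypass_isPath, hp.sublist (p.edges_bypass_sublist_edges.map c)⟩

end RainbowColouring

theorem dist_le_graphDiam {V : Type*} [Finite V] (G : SimpleGraph V) (u v : V) :
    G.dist u v ≤ graphDiam G :=
  le_csSup (Set.finite_range _).bddAbove ⟨(u, v), rfl⟩

theorem exists_adj_of_dist_eq_add_one {V : Type*} {G : SimpleGraph V} {r v : V} {n : ℕ}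
    (h : G.dist r v = n + 1) : ∃ p, G.Adj p v ∧ G.dist r p = n := by
  obtain ⟨w, hw⟩ := exists_walk_of_dist_ne_zero (G := G) (u := v) (v := r) (by
    rw [SimpleGraph.dist_comm]
    lia)
  rw [SimpleGraph.dist_comm, h] at hw
  cases w with
  | nil => simp at hw
  | @cons _ p _ hvp w =>
    have hp_le : G.dist r p ≤ w.length := SimpleGraph.dist_comm ▸ dist_le w
    have hp_near := hvp.diff_dist_adj (u := r)
    rw [Walk.length_cons] at hw
    exact ⟨p, hvp.symm, by lia⟩

section CliqueLayers

variable {V : Type*} {G : SimpleGraph V} {r : V}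

/-- The layers of the breadth-first search from `r`, i.e. the sets of vertices at a fixed distance
from `r`, are cliques of `G`. -/
def HasCliqueLayers (G : SimpleGraph V) (r : V) : Prop :=
  ∀ n, G.IsClique {v | G.dist r v = n}

/-- The edge colouring which gives an edge with farther endpoint at distance `n + 1` from `r` the
colour `n`. In a connected graph the subtraction never truncates on an edge, since `r` is the only
vertex at distance `0`. -/
noncomputable def layerColouring (G : SimpleGraph V) (r : V) (e : Sym2 V) : ℕ :=
  (e.map (G.dist r)).sup - 1

theorem layerColouring_mk (u v : V) :
    layerColouring G r s(u, v) = max (G.dist r u) (G.dist r v) - 1 :=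
  rfl

theorem layerColouring_mk_lt (hG : G.Connected) {u v : V} {n : ℕ} (huv : G.Adj u v)
    (hu : G.dist r u ≤ n) (hv : G.dist r v ≤ n) : layerColouring G r s(u, v) < n := by
  have not_both_root : ¬(G.dist r u = 0 ∧ G.dist r v = 0) := by
    rw [hG.dist_eq_zero_iff, hG.dist_eq_zero_iff]
    rintro ⟨rfl, rfl⟩
    exact huv.ne rfl
  rw [layerColouring_mk]
  lia

theorem layerColouring_lt (hG : G.Connected) {n : ℕ} (hn : ∀ v, G.dist r v ≤ n) {e : Sym2 V}
    (he : e ∈ G.edgeSet) : layerColouring G r e < n := by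
  cases e with
  | h u v => exact layerColouring_mk_lt hG he (hn u) (hn v)

theorem HasCliqueLayers.exists_rainbow_walk (h : HasCliqueLayers G r) (hG : G.Connected) {u v : V}
    (huv : G.dist r u ≤ G.dist r v) :
    ∃ p : G.Walk u v, (p.edges.map (layerColouring G r)).Nodup ∧
      ∀ e ∈ p.edges, layerColouring G r e < G.dist r v := by
  obtain ⟨k, hk⟩ := Nat.exists_eq_add_of_le huv
  clear huv
  induction k generalizing v with
  | zero =>
    rcases eq_or_ne u v with rfl | hne
    · exact ⟨.nil, by simp, by simp⟩
    · have hadj : G.Adj u v := h (G.dist r v) hk.symm rfl hne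
      exact ⟨hadj.toWalk, by simp, by simpa using layerColouring_mk_lt hG hadj hk.ge le_rfl⟩
  | succ k ih =>
    obtain ⟨w, hwv, hw⟩ := exists_adj_of_dist_eq_add_one hk
    obtain ⟨p, hp, hp_lt⟩ := ih hw
    have colour_last : layerColouring G r s(w, v) = G.dist r w := by
      rw [layerColouring_mk]
      lia
    refine ⟨p.concat hwv, ?_, ?_⟩
    · rw [Walk.edges_concat, List.concat_eq_append, List.map_append, List.nodup_append']
      refine ⟨hp, by simp, ?_⟩
      simpa [colour_last] using fun e he ↦ (hp_lt e he).ne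
    · intro e he
      rw [Walk.edges_concat, List.concat_eq_append, List.mem_append, List.mem_singleton] at he
      rcases he with he | rfl
      · have := hp_lt e he
        lia
      · lia

theorem HasCliqueLayers.rainbowConnectedUnder (h : HasCliqueLayers G r) (hG : G.Connected) :
    RainbowConnectedUnder G (layerColouring G r) := by
  refine rainbowConnectedUnder_of_exists_walk fun u v ↦ ?_
  rcases le_total (G.dist r u) (G.dist r v) with huv | hvu
  · obtain ⟨p, hp, -⟩ := h.exists_rainbow_walk hG huv
    exact ⟨p, hp⟩
  · obtain ⟨p, hp, -⟩ := h.exists_rainbow_walk hG hvu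
    exact ⟨p.reverse, by rwa [Walk.edges_reverse, List.map_reverse, List.nodup_reverse]⟩

end CliqueLayers

section Umbrella

variable {V α : Type*} {G : SimpleGraph V} {f : V → α} {r u v : V}

/-- An umbrella ordering (also called an indifference or proper interval ordering) of `G`, encoded
by a map to an ordered type, not necessarily injective: a vertex lying between two adjacent
vertices is adjacent to both of them. -/
def IsUmbrella [LE α] (G : SimpleGraph V) (f : V → α) : Prop :=
  ∀ ⦃u v w⦄, f u ≤ f v → f v ≤ f w → G.Adj u w → (u ≠ v → G.Adj u v) ∧ (v ≠ w → G.Adj v w)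

theorem IsUmbrella.dist_le_dist [LinearOrder α] (hf : IsUmbrella G f) (hG : G.Connected)
    (hr : ∀ v, f r ≤ f v) (huv : f u < f v) : G.dist r u ≤ G.dist r v := by
  induction hn : G.dist r v generalizing v with
  | zero =>
    obtain rfl : r = v := hG.dist_eq_zero_iff.mp hn
    exact absurd huv (hr u).not_gt
  | succ n ih =>
    obtain ⟨p, hpv, hp⟩ := exists_adj_of_dist_eq_add_one hn
    rcases lt_or_ge (f u) (f p) with hup | hpu
    · exact (ih hup hp).trans n.le_succ
    · rcases eq_or_ne p u with rfl | hne
      · lia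
      · have hpu_near := ((hf hpu huv.le hpv).1 hne).diff_dist_adj (u := r)
        lia

theorem IsUmbrella.adj_of_dist_eq [LinearOrder α] (hf : IsUmbrella G f) (hG : G.Connected)
    (hr : ∀ v, f r ≤ f v) (hne : u ≠ v) (hdist : G.dist r u = G.dist r v) (huv : f u ≤ f v) :
    G.Adj u v := by
  cases hn : G.dist r v with
  | zero =>
    have hru : r = u := hG.dist_eq_zero_iff.mp (hdist.trans hn)
    have hrv : r = v := hG.dist_eq_zero_iff.mp hn
    exact absurd (hru.symm.trans hrv) hne
  | succ n =>
    obtain ⟨p, hpv, hp⟩ := exists_adj_of_dist_eq_add_one hn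
    have hpu : f p ≤ f u := by
      by_contra! hup
      have := hf.dist_le_dist hG hr hup
      lia
    exact (hf hpu huv hpv).2 hne

theorem IsUmbrella.hasCliqueLayers [LinearOrder α] (hf : IsUmbrella G f) (hG : G.Connected)
    (hr : ∀ v, f r ≤ f v) : HasCliqueLayers G r := by
  rintro n u rfl v hv hne
  rcases le_total (f u) (f v) with huv | hvu
  · exact hf.adj_of_dist_eq hG hr hne hv.symm huv
  · exact (hf.adj_of_dist_eq hG hr hne.symm hv hvu).symm

end Umbrella

theorem nonempty_Icc_add_inter_Icc_add_iff {α : Type*} [AddCommGroup α] [LinearOrder α]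
    [IsOrderedAddMonoid α] {x y d : α} :
    (Set.Icc x (x + d) ∩ Set.Icc y (y + d)).Nonempty ↔ |x - y| ≤ d := by
  rw [Set.Icc_inter_Icc, Set.nonempty_Icc, sup_le_iff, le_inf_iff, le_inf_iff, abs_sub_le_iff,
    sub_le_iff_le_add', sub_le_iff_le_add', le_add_iff_nonneg_right, le_add_iff_nonneg_right]
  constructor
  · rintro ⟨⟨-, hxy⟩, hyx, -⟩
    exact ⟨hxy, hyx⟩
  · rintro ⟨hxy, hyx⟩
    have hd : 0 ≤ d := by
      rcases le_total x y with h | h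
      · exact (le_add_iff_nonneg_right x).mp (h.trans hyx)
      · exact (le_add_iff_nonneg_right y).mp (h.trans hxy)
    exact ⟨⟨hd, hxy⟩, hyx, hd⟩

theorem IsUnitIntervalGraph.exists_isUmbrella {V : Type*} {G : SimpleGraph V}
    (h : IsUnitIntervalGraph G) : ∃ a : V → ℝ, IsUmbrella G a := by
  obtain ⟨a, ha⟩ := h
  simp only [nonempty_Icc_add_inter_Icc_add_iff] at ha
  refine ⟨a, fun u v w huv hvw huw ↦ ?_⟩
  have hdist : |a u - a w| ≤ 1 := (ha u w huw.ne).mp huw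
  rw [abs_le] at hdist
  exact ⟨fun hne ↦ (ha u v hne).mpr (abs_le.mpr ⟨by linarith, by linarith⟩),
    fun hne ↦ (ha v w hne).mpr (abs_le.mpr ⟨by linarith, by linarith⟩)⟩

theorem stmt_10_general {V : Type*} [Finite V] {G : SimpleGraph V} (hG : G.Connected)
    (hui : IsUnitIntervalGraph G) : rc G = graphDiam G := by
  obtain ⟨a, ha⟩ := hui.exists_isUmbrella
  have := hG.nonempty
  obtain ⟨r, hr⟩ := Finite.exists_min a
  have hlayers : HasCliqueLayers G r := ha.hasCliqueLayers hG hr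
  exact (hlayers.rainbowConnectedUnder hG).rc_eq_graphDiam
    fun e he ↦ layerColouring_lt hG (dist_le_graphDiam G r) he

/-- For a finite connected unit interval graph `G` with minimum degree
at least 2, `rc(G) = diam(G)`. -/
theorem stmt_10 {V : Type*} [Fintype V] (G : SimpleGraph V) (hG : G.Connected)
    (hui : IsUnitIntervalGraph G) (hδ : ∀ v : V, 2 ≤ deg G v) :
    rc G = graphDiam G :=
  stmt_10_general hG hui
end

section
/- Every finite connected simple graph G of order n and minimum degree δ has a connected two-step dominating set D (every vertex is at distance at most 2 from D and G[D] is connected) whose size satisfies |D| ≤ 3(n − |N^2(D)|)/(δ + 1) − 2, where N^2(D) is the set of vertices at graph distance exactly 2 from D. -/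
open SimpleGraph Set

/-!
Grow a connected set `D` greedily. As long as some vertex is at distance more than `2` from `D`,
a vertex `v` at distance exactly `3` exists; adding a shortest path from `D` to `v` costs three
vertices, while the closed neighbourhood of `v` is disjoint from `N[D]` and so contributes at least
`δ + 1` new vertices to it. Hence `(|D| + 2)(δ + 1) ≤ 3|N[D]|` persists, starting from a single
vertex, and `N[D]` is disjoint from `N²(D)`. The same count with `k + 1` in place of `3` handles
`k`-step domination for every `k ≥ 2`.
-/

section

variable {V : Type*} {G : SimpleGraph V} {D : Set V} {u v w : V} {δ k : ℕ}

lemma distSet_le_dist (hu : u ∈ D) : distSet G D v ≤ G.dist u v :=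
  Nat.sInf_le ⟨u, hu, rfl⟩

lemma exists_mem_dist_eq_distSet (hD : D.Nonempty) (v : V) : ∃ u ∈ D, G.dist u v = distSet G D v :=
  Nat.sInf_mem (hD.image fun u => G.dist u v)

lemma distSet_eq_zero_of_mem (hv : v ∈ D) : distSet G D v = 0 :=
  Nat.le_zero.1 ((distSet_le_dist hv).trans_eq dist_self)

lemma distSet_singleton (u v : V) : distSet G {u} v = G.dist u v := by
  rw [distSet, Set.image_singleton, csInf_singleton]

lemma distSet_le_distSet_add_dist (hG : G.Connected) (hD : D.Nonempty) (v w : V) :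
    distSet G D w ≤ distSet G D v + G.dist v w := by
  obtain ⟨u, hu, huv⟩ := exists_mem_dist_eq_distSet (G := G) hD v
  calc distSet G D w ≤ G.dist u w := distSet_le_dist hu
    _ ≤ G.dist u v + G.dist v w := hG.dist_triangle
    _ = distSet G D v + G.dist v w := by rw [huv]

-- The first `k` steps of a shortest walk from `D` to `w`.
lemma exists_walk_length_eq_distSet (hG : G.Connected) (hD : D.Nonempty)
    (hk : k ≤ distSet G D w) :
    ∃ u ∈ D, ∃ v, ∃ p : G.Walk u v, p.length = k ∧ distSet G D v = k := by
  obtain ⟨u, hu, huw⟩ := exists_mem_dist_eq_distSet (G := G) hD w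
  obtain ⟨p, hp⟩ := hG.exists_walk_length_eq_dist u w
  have h_take : (p.take k).length = k := by rw [Walk.take_length]; omega
  have h_drop : G.dist (p.getVert k) w ≤ p.length - k :=
    (dist_le (p.drop k)).trans_eq (p.drop_length k)
  have h_near : distSet G D (p.getVert k) ≤ k :=
    (distSet_le_dist hu).trans ((dist_le (p.take k)).trans_eq h_take)
  have h_far := distSet_le_distSet_add_dist hG hD (p.getVert k) w
  exact ⟨u, hu, p.getVert k, p.take k, h_take, by omega⟩

/-- The closed neighbourhood `N[D]` of a set of vertices: `D` together with all neighbours of its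
elements. -/
def closedNeighborSet (G : SimpleGraph V) (D : Set V) : Set V :=
  ⋃ u ∈ D, insert u (G.neighborSet u)

lemma closedNeighborSet_singleton (v : V) :
    closedNeighborSet G {v} = insert v (G.neighborSet v) :=
  Set.biUnion_singleton v _

lemma closedNeighborSet_union (D E : Set V) :
    closedNeighborSet G (D ∪ E) = closedNeighborSet G D ∪ closedNeighborSet G E :=
  Set.biUnion_union D E _

lemma closedNeighborSet_mono {E : Set V} (h : D ⊆ E) :
    closedNeighborSet G D ⊆ closedNeighborSet G E :=
  Set.biUnion_subset_biUnion_left h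

lemma ncard_closedNeighborSet_singleton (hv : (G.neighborSet v).Finite) :
    (closedNeighborSet G {v}).ncard = deg G v + 1 := by
  rw [closedNeighborSet_singleton, Set.ncard_insert_of_notMem G.notMem_neighborSet_self hv, deg]

lemma distSet_le_one_of_mem_closedNeighborSet (hv : v ∈ closedNeighborSet G D) :
    distSet G D v ≤ 1 := by
  obtain ⟨u, hu, rfl | huv⟩ := Set.mem_iUnion₂.1 hv
  · exact (distSet_eq_zero_of_mem hu).trans_le zero_le_one
  · exact (distSet_le_dist hu).trans_eq (dist_eq_one_iff_adj.2 huv)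

lemma disjoint_closedNeighborSet_setOf_distSet_eq (hk : 1 < k) :
    Disjoint (closedNeighborSet G D) {v | distSet G D v = k} :=
  Set.disjoint_left.2 fun _ hv hvk =>
    (hk.trans_eq hvk.symm).not_ge (distSet_le_one_of_mem_closedNeighborSet hv)

lemma disjoint_closedNeighborSet_singleton (hG : G.Connected) (hD : D.Nonempty)
    (hv : 2 < distSet G D v) : Disjoint (closedNeighborSet G D) (closedNeighborSet G {v}) := by
  refine Set.disjoint_left.2 fun x hxD hxv => ?_
  have hDx := distSet_le_one_of_mem_closedNeighborSet hxD
  have hxv' : G.dist x v ≤ 1 := by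
    rw [SimpleGraph.dist_comm, ← distSet_singleton]
    exact distSet_le_one_of_mem_closedNeighborSet hxv
  have := distSet_le_distSet_add_dist hG hD x v
  omega

lemma ncard_closedNeighborSet_add_ncard_distSet_eq_le [Finite V] (hk : 1 < k) :
    (closedNeighborSet G D).ncard + {v | distSet G D v = k}.ncard ≤ Nat.card V := by
  rw [← Set.ncard_union_eq (disjoint_closedNeighborSet_setOf_distSet_eq hk)]
  exact Set.ncard_le_card _

lemma ncard_closedNeighborSet_add_deg_lt [Finite V] (hG : G.Connected) (hD : D.Nonempty)
    (hv : 2 < distSet G D v) {E : Set V} (hDE : D ⊆ E) (hvE : v ∈ E) :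
    (closedNeighborSet G D).ncard + deg G v < (closedNeighborSet G E).ncard := by
  have h_sub : closedNeighborSet G D ∪ closedNeighborSet G {v} ⊆ closedNeighborSet G E := by
    rw [← closedNeighborSet_union]
    exact closedNeighborSet_mono (Set.union_subset hDE (Set.singleton_subset_iff.2 hvE))
  have h_card := Set.ncard_le_ncard h_sub
  rw [Set.ncard_union_eq (disjoint_closedNeighborSet_singleton hG hD hv),
    ncard_closedNeighborSet_singleton (Set.toFinite _)] at h_card
  exact h_card

lemma ncard_union_support_le (hu : u ∈ D) (p : G.Walk u v) :
    (D ∪ {x | x ∈ p.support}).ncard ≤ D.ncard + p.length := by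
  classical
  have h_tail : D ∪ {x | x ∈ p.support} = D ∪ p.support.tail.toFinset := by
    ext x
    simp only [Set.mem_union, Set.mem_ofPred_eq, Walk.mem_support_iff, List.coe_toFinset]
    grind
  calc (D ∪ {x | x ∈ p.support}).ncard
      ≤ D.ncard + (p.support.tail.toFinset : Set V).ncard := h_tail ▸ Set.ncard_union_le _ _
    _ ≤ D.ncard + p.support.tail.length := by
      rw [Set.ncard_coe_finset]
      exact Nat.add_le_add_left (List.toFinset_card_le _) _
    _ = D.ncard + p.length := by simp

/-- The invariant of the greedy construction of a `k`-step dominating set in a graph of minimum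
degree at least `δ`: the set is connected, and small compared with its closed neighbourhood. -/
structure IsEconomical (G : SimpleGraph V) (δ k : ℕ) (D : Set V) : Prop where
  connected : (G.induce D).Connected
  ncard_le : (D.ncard + k) * (δ + 1) ≤ (k + 1) * (closedNeighborSet G D).ncard

lemma isEconomical_singleton (hfin : (G.neighborSet v).Finite) (hv : δ ≤ deg G v) :
    IsEconomical G δ k {v} where
  connected := .of_subsingleton
  ncard_le := by
    rw [Set.ncard_singleton, ncard_closedNeighborSet_singleton hfin, add_comm 1 k]
    gcongr

lemma IsEconomical.exists_ssuperset [Finite V] (hG : G.Connected) (hδ : ∀ v, δ ≤ deg G v)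
    (hk : 2 ≤ k) (hD : IsEconomical G δ k D) (hw : k < distSet G D w) :
    ∃ E, IsEconomical G δ k E ∧ D ⊂ E := by
  have hne : D.Nonempty := Set.nonempty_coe_sort.1 hD.connected.nonempty
  obtain ⟨u, hu, v, p, hp, hv⟩ := exists_walk_length_eq_distSet hG hne (Nat.succ_le_of_lt hw)
  set E := D ∪ {x | x ∈ p.support}
  have hvE : v ∈ E := Or.inr p.end_mem_support
  have hDE : D ⊆ E := Set.subset_union_left
  refine ⟨E, ⟨?connected, ?ncard_le⟩, hDE, fun hED => ?proper⟩
  case connected =>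
    exact induce_union_connected hD.connected.preconnected
      p.connected_induce_support.preconnected ⟨u, hu, p.start_mem_support⟩
  case ncard_le =>
    have h_new : (closedNeighborSet G D).ncard + (δ + 1) ≤ (closedNeighborSet G E).ncard :=
      (Nat.add_le_add_left (Nat.succ_le_succ (hδ v)) _).trans
        (ncard_closedNeighborSet_add_deg_lt hG hne (by omega) hDE hvE)
    calc (E.ncard + k) * (δ + 1)
        ≤ (D.ncard + (k + 1) + k) * (δ + 1) := by
          gcongr
          exact (ncard_union_support_le hu p).trans_eq (by rw [hp])
      _ = (D.ncard + k) * (δ + 1) + (k + 1) * (δ + 1) := by ring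
      _ ≤ (k + 1) * (closedNeighborSet G D).ncard + (k + 1) * (δ + 1) :=
          Nat.add_le_add_right hD.ncard_le _
      _ = (k + 1) * ((closedNeighborSet G D).ncard + (δ + 1)) := (mul_add _ _ _).symm
      _ ≤ (k + 1) * (closedNeighborSet G E).ncard := Nat.mul_le_mul_left _ h_new
  case proper =>
    have := distSet_eq_zero_of_mem (G := G) (hED hvE)
    omega

lemma exists_isEconomical_forall_distSet_le [Finite V] (hG : G.Connected)
    (hδ : ∀ v, δ ≤ deg G v) (hk : 2 ≤ k) :
    ∃ D, IsEconomical G δ k D ∧ ∀ v, distSet G D v ≤ k := by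
  obtain ⟨v⟩ := hG.nonempty
  obtain ⟨D, hD⟩ := (Set.toFinite {D | IsEconomical G δ k D}).exists_maximal
    ⟨{v}, isEconomical_singleton (Set.toFinite _) (hδ v)⟩
  refine ⟨D, hD.prop, fun w => not_lt.1 fun hw => ?_⟩
  obtain ⟨E, hE, hDE⟩ := hD.prop.exists_ssuperset hG hδ hk hw
  exact hD.not_prop_of_gt hDE hE

end

/-- Every finite connected graph of order `n` and minimum degree `δ`
has a connected two-step dominating set `D` with
`|D| ≤ 3(n − |N²(D)|)/(δ + 1) − 2`. -/
theorem stmt_12 {V : Type*} [Fintype V] (G : SimpleGraph V) (hG : G.Connected)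
    (δ : ℕ) (hδ : ∀ v : V, δ ≤ deg G v) :
    ∃ D : Set V, (∀ v : V, ∃ u ∈ D, G.dist u v ≤ 2) ∧ (G.induce D).Connected ∧
      (D.ncard : ℝ) ≤
        3 * ((Fintype.card V : ℝ) - (({v : V | distSet G D v = 2}).ncard : ℝ)) / (δ + 1)
          - 2 := by
  obtain ⟨D, hD, h_dom⟩ := exists_isEconomical_forall_distSet_le hG hδ le_rfl
  refine ⟨D, fun v => ?_, hD.connected, ?_⟩
  · obtain ⟨u, hu, huv⟩ := exists_mem_dist_eq_distSet (G := G)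
      (Set.nonempty_coe_sort.1 hD.connected.nonempty) v
    exact ⟨u, hu, huv.trans_le (h_dom v)⟩
  · have h_econ : ((D.ncard : ℝ) + 2) * (δ + 1) ≤ 3 * (closedNeighborSet G D).ncard :=
      mod_cast hD.ncard_le
    have h_disj : ((closedNeighborSet G D).ncard : ℝ) + {v | distSet G D v = 2}.ncard ≤
        Fintype.card V := by
      rw [← Nat.card_eq_fintype_card]
      exact_mod_cast ncard_closedNeighborSet_add_ncard_distSet_eq_le one_lt_two
    rw [le_sub_iff_add_le, le_div_iff₀ (by positivity)]
    linarith
end
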